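/- Let h(z) = λ₁e^{μ₁z} + ⋯ + λ_N e^{μ_N z} be an exponential polynomial with λ_j, μ_j ∈ ℂ. If h(n) = 0 for every integer n, then the function z ↦ sin(πz) = (e^{iπz} − e^{−iπz})/(2i), which is an element of 𝓔, divides h in the ring 𝓔. -/

import Mathlib

open Complex Set

noncomputable section

/-- `f` is an exponential polynomial, i.e. an element of the ring `𝓔`. -/
def IsExpPoly (f : ℂ → ℂ) : Prop :=
  ∃ (N : ℕ) (lam mu : Fin N → ℂ),
    ∀ z : ℂ, f z = ∑ i, lam i * Complex.exp (mu i * z)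

/-- `h` divides `f` in the ring `𝓔`. -/
def EDvd (h f : ℂ → ℂ) : Prop :=
  ∃ q : ℂ → ℂ, IsExpPoly q ∧ f = h * q

/-- `f` is a unit of the ring `𝓔`. -/
def EUnit (f : ℂ → ℂ) : Prop :=
  IsExpPoly f ∧ ∃ g : ℂ → ℂ, IsExpPoly g ∧ f * g = 1

/-- `f` is irreducible in the ring `𝓔`. -/
def EIrreducible (f : ℂ → ℂ) : Prop :=
  IsExpPoly f ∧ f ≠ 0 ∧ ¬ EUnit f ∧
    ∀ g h : ℂ → ℂ, IsExpPoly g → IsExpPoly h → f = g * h → EUnit g ∨ EUnit h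

/-- canonical representation: pairwise distinct exponents, nonzero coefficients. -/
def IsCanonicalRep (f : ℂ → ℂ) {N : ℕ} (lam mu : Fin N → ℂ) : Prop :=
  (∀ i, lam i ≠ 0) ∧ Function.Injective mu ∧
    ∀ z : ℂ, f z = ∑ i, lam i * Complex.exp (mu i * z)

/-- `f` is a simple exponential polynomial: its support has `ℚ`-dimension 1. -/
def IsSimple (f : ℂ → ℂ) : Prop :=
  ∃ (N : ℕ) (lam mu : Fin N → ℂ), IsCanonicalRep f lam mu ∧
    Module.finrank ℚ (Submodule.span ℚ (Set.range mu)) = 1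

/-- Transcendence degree over `ℚ` of (the field generated by) a set of complex numbers. -/
noncomputable def trdegQ (s : Set ℂ) : Cardinal.{0} :=
  ⨆ t : {t : Finset ℂ // ↑t ⊆ s ∧ AlgebraicIndependent ℚ (Subtype.val : {x : ℂ // x ∈ t} → ℂ)},
    (t.1.card : Cardinal)

/-- Schanuel's Conjecture. -/
def SchanuelConjecture : Prop :=
  ∀ (n : ℕ) (lam : Fin n → ℂ), LinearIndependent ℚ lam →
    (n : Cardinal) ≤ trdegQ (Set.range lam ∪ Set.range fun i => Complex.exp (lam i))

theorem IsExpPoly.mk' {f : ℂ → ℂ} {ι : Type} [Fintype ι] (lam mu : ι → ℂ)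
    (hf : ∀ z : ℂ, f z = ∑ i, lam i * Complex.exp (mu i * z)) : IsExpPoly f := by
  refine ⟨Fintype.card ι, fun i => lam ((Fintype.equivFin ι).symm i),
    fun i => mu ((Fintype.equivFin ι).symm i), fun z => ?_⟩
  rw [hf z]
  exact ((Fintype.equivFin ι).symm.sum_comp (fun i => lam i * Complex.exp (mu i * z))).symm

theorem IsExpPoly.add' {f g : ℂ → ℂ} (hf : IsExpPoly f) (hg : IsExpPoly g) :
    IsExpPoly (f + g) := by
  obtain ⟨N, l, m, h1⟩ := hf
  obtain ⟨M, l', m', h2⟩ := hg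
  refine IsExpPoly.mk' (ι := Fin N ⊕ Fin M) (Sum.elim l l') (Sum.elim m m') fun z => ?_
  simp [h1, h2]

theorem IsExpPoly.smul' {f : ℂ → ℂ} (c : ℂ) (hf : IsExpPoly f) :
    IsExpPoly (fun z => c * f z) := by
  obtain ⟨N, l, m, h1⟩ := hf
  refine ⟨N, fun i => c * l i, m, fun z => ?_⟩
  simp [h1, Finset.mul_sum, mul_assoc]

theorem isExpPoly_single (c m : ℂ) : IsExpPoly (fun z => c * Complex.exp (m * z)) :=
  ⟨1, fun _ => c, fun _ => m, fun z => by simp⟩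

theorem EDvd.zero' (S : ℂ → ℂ) : EDvd S 0 :=
  ⟨0, ⟨0, fun _ => 0, fun _ => 0, fun z => by simp⟩, by simp⟩

theorem EDvd.add' {S f g : ℂ → ℂ} (hf : EDvd S f) (hg : EDvd S g) : EDvd S (f + g) := by
  obtain ⟨q, hq, rfl⟩ := hf
  obtain ⟨r, hr, rfl⟩ := hg
  exact ⟨q + r, hq.add' hr, by rw [mul_add]⟩

theorem EDvd.smul' {S f : ℂ → ℂ} (c : ℂ) (hf : EDvd S f) : EDvd S (fun z => c * f z) := by
  obtain ⟨q, hq, rfl⟩ := hf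
  refine ⟨_, hq.smul' c, ?_⟩
  funext z
  simp only [Pi.mul_apply]
  ring

theorem EDvd.sum' {S : ℂ → ℂ} {ι : Type} (s : Finset ι) (f : ι → ℂ → ℂ)
    (hf : ∀ i, EDvd S (f i)) : EDvd S (∑ i ∈ s, f i) := by
  classical
  induction s using Finset.induction_on with
  | empty => simpa using EDvd.zero' S
  | insert a s ha ih => rw [Finset.sum_insert ha]; exact (hf a).add' ih

def sinPi : ℂ → ℂ := fun z : ℂ =>
        (Complex.exp (Complex.I * (Real.pi : ℂ) * z) -
          Complex.exp (-(Complex.I * (Real.pi : ℂ) * z))) / (2 * Complex.I)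

theorem sinPi_step (c m : ℂ) : EDvd sinPi (fun z => c * (
    Complex.exp ((m + 2 * Real.pi * Complex.I) * z) - Complex.exp (m * z))) := by
  refine ⟨_, isExpPoly_single (c * (2 * Complex.I)) (m + Real.pi * Complex.I), ?_⟩
  funext z
  have h1 : Complex.exp ((m + 2 * Real.pi * Complex.I) * z) =
      Complex.exp (Complex.I * (Real.pi : ℂ) * z) * Complex.exp ((m + Real.pi * Complex.I) * z) := by
    rw [← Complex.exp_add]; congr 1; ring
  have h2 : Complex.exp (m * z) =
      Complex.exp (-(Complex.I * (Real.pi : ℂ) * z)) *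
        Complex.exp ((m + Real.pi * Complex.I) * z) := by
    rw [← Complex.exp_add]; congr 1; ring
  simp only [Pi.mul_apply, sinPi]
  rw [h1, h2]
  have := Complex.I_ne_zero
  field_simp

theorem sinPi_int (m : ℂ) (k : ℤ) : EDvd sinPi (fun z =>
    Complex.exp ((m + k * (2 * Real.pi * Complex.I)) * z) - Complex.exp (m * z)) := by
  induction k using Int.induction_on with
  | zero => convert EDvd.zero' sinPi using 1; funext z; simp
  | succ k ih =>
    convert ih.add' (sinPi_step 1 (m + k * (2 * Real.pi * Complex.I))) using 1
    funext z
    simp only [Pi.add_apply]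
    push_cast
    ring_nf
  | pred k ih =>
    convert ih.add' (sinPi_step (-1) (m + (-k - 1) * (2 * Real.pi * Complex.I))) using 1
    funext z
    simp only [Pi.add_apply]
    push_cast
    ring_nf

theorem sum_eq_zero_of_pow {N : ℕ} (lam a : Fin N → ℂ)
    (h : ∀ n : ℕ, ∑ i, lam i * a i ^ n = 0) (g : ℂ → ℂ) : ∑ i, lam i * g (a i) = 0 := by
  classical
  have key : ∀ p : Polynomial ℂ, ∑ i, lam i * p.eval (a i) = 0 := by
    intro p
    induction p using Polynomial.induction_on' with
    | add p q hp hq => simp [mul_add, Finset.sum_add_distrib, hp, hq]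
    | monomial n c =>
      simp only [Polynomial.eval_monomial]
      rw [← mul_zero c, ← h n, Finset.mul_sum]
      exact Finset.sum_congr rfl fun i _ => by ring
  rw [← key (Lagrange.interpolate (Finset.univ.image a) id g)]
  refine Finset.sum_congr rfl fun i _ => ?_
  have := Lagrange.eval_interpolate_at_node (s := Finset.univ.image a) (v := id) g
    (Function.injective_id.injOn) (i := a i) (by simp)
  simp only [id] at this
  rw [← this]

/-- If an exponential polynomial vanishes at all integers, then `sin (π z)`
(i.e. `(e^{iπz} - e^{-iπz})/(2i)`) divides it in the ring `𝓔`. -/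
theorem sin_pi_dvd_of_vanishes_on_integers
    (N : ℕ) (lam mu : Fin N → ℂ) (h : ℂ → ℂ)
    (hrep : ∀ z : ℂ, h z = ∑ i, lam i * Complex.exp (mu i * z))
    (hvanish : ∀ n : ℤ, h (n : ℂ) = 0) :
    EDvd (fun z : ℂ =>
        (Complex.exp (Complex.I * (Real.pi : ℂ) * z) -
          Complex.exp (-(Complex.I * (Real.pi : ℂ) * z))) / (2 * Complex.I)) h := by
  have hz : ∀ z : ℂ, ∑ i, lam i * Complex.exp (Complex.log (Complex.exp (mu i)) * z) = 0 := by
    intro z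
    refine sum_eq_zero_of_pow lam (fun i => Complex.exp (mu i)) (fun n => ?_)
      (fun w => Complex.exp (Complex.log w * z))
    have := hvanish n
    rw [hrep] at this
    rw [← this]
    refine Finset.sum_congr rfl fun i _ => ?_
    rw [← Complex.exp_nat_mul]
    push_cast
    rw [mul_comm (n : ℂ)]
  have hk : ∀ i, ∃ k : ℤ, mu i = Complex.log (Complex.exp (mu i)) +
      k * (2 * Real.pi * Complex.I) := fun i =>
    Complex.exp_eq_exp_iff_exists_int.1 (Complex.exp_log (Complex.exp_ne_zero (mu i))).symm
  change EDvd sinPi h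
  have := EDvd.sum' (S := sinPi) Finset.univ (fun i z => lam i * (Complex.exp (mu i * z) -
    Complex.exp (Complex.log (Complex.exp (mu i)) * z))) (fun i => by
      obtain ⟨k, hk⟩ := hk i
      have h3 := (sinPi_int (Complex.log (Complex.exp (mu i))) k).smul' (lam i)
      rw [← hk] at h3
      exact h3)
  convert this using 1
  funext z
  rw [hrep]
  simp only [Finset.sum_apply, mul_sub, Finset.sum_sub_distrib, hz, sub_zero]
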